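/- arXiv:1707.06369 — 3 statements merged into one kernel-verified Lean document; each statement's English description precedes it below -/
import Mathlib

section
/- Let m ≥ 1 and let p : ℝ^m → ℝ be a polynomial function. Writing L := ∑_{μ=1}^m ∂²/∂x_μ² for the (negative of the positive) Laplace operator on polynomials, one has ∑_{j=0}^∞ (1/(2^j · j!)) · (L^j p)(0) = (2π)^{-m/2} ∫_{ℝ^m} e^{-‖x‖²/2} p(x) dx, where the sum on the left is finite because L^j p = 0 once 2j exceeds the degree of p, and the integral is with respect to Lebesgue measure on ℝ^m. -/
/-! The identity holds because both sides are additive functionals `A` on polynomials that take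
the value `a` on the constant `a` and satisfy the same recursion `A (X i * q) = A (∂ᵢ q)`; such a
functional is determined on monomials by well-founded induction on the exponent, hence on all
polynomials (`eq_of_X_mul_eq_pderiv`).

For the heat-operator side, the recursion is the evaluation at `0` of the commutator formula
`L^(j+1) (Xᵢ q) = Xᵢ L^(j+1) q + 2 (j+1) ∂ᵢ L^j q` (`lap_iterate_X_mul`), which also shows that `L`
is locally nilpotent (`lap_eventually_zero`), so that every series involved is a finite sum.
For the Gaussian side, it is integration by parts along the `i`-th coordinate direction, since
`∂ᵢ e^{-‖x‖²/2} = -xᵢ e^{-‖x‖²/2}`; the integrability needed there reduces to that of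
`x ^ n e^{-x²/2}` on the line by factoring monomials over the coordinates. -/

open MeasureTheory
open scoped Real

/-- The (negative of the positive) Laplace operator on polynomial functions on `ℝ^m`:
`L p = ∑_{μ=1}^m ∂²p/∂x_μ²`. -/
noncomputable def lap (m : ℕ) (p : MvPolynomial (Fin m) ℝ) : MvPolynomial (Fin m) ℝ :=
  ∑ μ : Fin m, MvPolynomial.pderiv μ (MvPolynomial.pderiv μ p)

namespace GaussPoly

open MvPolynomial

/-! ### Functionals determined by the Gaussian recursion -/

/-- Two additive functionals that agree on constants and both satisfy `A (X i * q) = A (∂ᵢ q)`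
coincide: the recursion lowers the exponent of every nonconstant monomial. -/
lemma eq_of_X_mul_eq_pderiv {σ : Type*} [Finite σ] {A B : MvPolynomial σ ℝ → ℝ}
    (hA : ∀ p q, A (p + q) = A p + A q) (hB : ∀ p q, B (p + q) = B p + B q)
    (hC : ∀ a, A (C a) = B (C a))
    (hAX : ∀ i q, A (X i * q) = A (pderiv i q)) (hBX : ∀ i q, B (X i * q) = B (pderiv i q))
    (p : MvPolynomial σ ℝ) : A p = B p := by
  induction p using MvPolynomial.induction_on' with
  | add p q hp hq => rw [hA, hB, hp, hq]
  | monomial s a =>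
    induction s using WellFoundedLT.induction generalizing a with
    | ind s ih =>
      by_cases hs : s = 0
      · subst hs; exact hC a
      · obtain ⟨i, hi⟩ := Finsupp.ne_iff.mp hs
        have hi : s i ≠ 0 := by simpa using hi
        have hle : Finsupp.single i 1 ≤ s := by
          simpa [Finsupp.single_le_iff] using Nat.one_le_iff_ne_zero.mpr hi
        have e : monomial s a = X i * monomial (s - Finsupp.single i 1) a := by
          rw [X, monomial_mul, one_mul, add_tsub_cancel_of_le hle]
        rw [e, hAX, hBX, pderiv_monomial]
        apply ih
        refine lt_of_le_of_ne (tsub_le_self.trans tsub_le_self) fun h => ?_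
        have := DFunLike.congr_fun h i
        simp at this
        omega

/-! ### The Laplacian on polynomials -/

lemma pderiv_comm {σ : Type*} (i j : σ) (p : MvPolynomial σ ℝ) :
    pderiv i (pderiv j p) = pderiv j (pderiv i p) := by
  classical
  ext s
  simp only [coeff_pderiv, Finsupp.add_apply, Finsupp.single_apply]
  rw [add_right_comm]
  by_cases h : i = j
  · subst h; ring
  · simp [h, Ne.symm h]; ring

variable {m : ℕ}

lemma lap_add (p q : MvPolynomial (Fin m) ℝ) : lap m (p + q) = lap m p + lap m q := by
  simp [lap, Finset.sum_add_distrib]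

lemma lap_nsmul (n : ℕ) (p : MvPolynomial (Fin m) ℝ) : lap m (n • p) = n • lap m p := by
  simp only [lap, map_nsmul, Finset.smul_sum]

lemma lap_zero : lap m 0 = 0 := by simp [lap]

lemma lap_C (a : ℝ) : lap m (C a) = 0 := by simp [lap]

lemma lap_pderiv (i : Fin m) (p : MvPolynomial (Fin m) ℝ) :
    lap m (pderiv i p) = pderiv i (lap m p) := by
  simp only [lap, map_sum]
  refine Finset.sum_congr rfl fun j _ => ?_
  rw [pderiv_comm j i p, pderiv_comm j i]

lemma lap_X_mul (i : Fin m) (p : MvPolynomial (Fin m) ℝ) :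
    lap m (X i * p) = X i * lap m p + 2 • pderiv i p := by
  have h : ∀ j : Fin m, pderiv j (pderiv j (X i * p)) =
      X i * pderiv j (pderiv j p) + if j = i then 2 • pderiv i p else 0 := by
    intro j
    by_cases hj : j = i
    · subst hj
      simp; ring
    · simp [pderiv_X_of_ne (Ne.symm hj), hj]
  simp only [lap, h, Finset.sum_add_distrib, Finset.mul_sum]
  simp

lemma lap_iterate_add (j : ℕ) (p q : MvPolynomial (Fin m) ℝ) :
    (lap m)^[j] (p + q) = (lap m)^[j] p + (lap m)^[j] q := by
  induction j generalizing p q with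
  | zero => rfl
  | succ j ih => simp only [Function.iterate_succ_apply, lap_add, ih]

lemma lap_iterate_pderiv (j : ℕ) (i : Fin m) (p : MvPolynomial (Fin m) ℝ) :
    (lap m)^[j] (pderiv i p) = pderiv i ((lap m)^[j] p) := by
  induction j generalizing p with
  | zero => rfl
  | succ j ih => simp only [Function.iterate_succ_apply, lap_pderiv, ih]

/-- The commutator `[L^(j+1), Xᵢ] = 2 (j+1) L^j ∂ᵢ`. -/
lemma lap_iterate_X_mul (j : ℕ) (i : Fin m) (p : MvPolynomial (Fin m) ℝ) :
    (lap m)^[j + 1] (X i * p) =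
      X i * (lap m)^[j + 1] p + (2 * (j + 1)) • (lap m)^[j] (pderiv i p) := by
  induction j with
  | zero => simp [lap_X_mul]
  | succ j ih =>
    rw [Function.iterate_succ_apply', ih, lap_add, lap_X_mul, lap_nsmul,
      ← Function.iterate_succ_apply' (lap m), ← Function.iterate_succ_apply' (lap m),
      ← lap_iterate_pderiv, add_assoc, ← add_smul]
    congr 2
    ring

lemma lap_iterate_zero_of_le {p : MvPolynomial (Fin m) ℝ} {N j : ℕ}
    (h : (lap m)^[N] p = 0) (hj : N ≤ j) : (lap m)^[j] p = 0 := by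
  induction j, hj using Nat.le_induction with
  | base => exact h
  | succ j _ ih => rw [Function.iterate_succ_apply', ih, lap_zero]

lemma lap_eventually_zero (p : MvPolynomial (Fin m) ℝ) : ∃ N, (lap m)^[N] p = 0 := by
  induction p using MvPolynomial.induction_on with
  | C a => exact ⟨1, lap_C a⟩
  | add p q hp hq =>
    obtain ⟨N, hN⟩ := hp
    obtain ⟨M, hM⟩ := hq
    refine ⟨max N M, ?_⟩
    rw [lap_iterate_add, lap_iterate_zero_of_le hN (le_max_left _ _),
      lap_iterate_zero_of_le hM (le_max_right _ _), add_zero]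
  | mul_X p i hp =>
    obtain ⟨N, hN⟩ := hp
    refine ⟨N + 1, ?_⟩
    rw [mul_comm, lap_iterate_X_mul, lap_iterate_pderiv, hN,
      lap_iterate_zero_of_le hN (Nat.le_succ N)]
    simp

/-! ### The heat-operator functional -/

/-- The `j`-th term of `e^{L/2} p` evaluated at `0`. -/
noncomputable def heatTerm (p : MvPolynomial (Fin m) ℝ) (j : ℕ) : ℝ :=
  (1 / (2 ^ j * (Nat.factorial j) : ℝ)) * eval (0 : Fin m → ℝ) ((lap m)^[j] p)

lemma summable_heatTerm (p : MvPolynomial (Fin m) ℝ) : Summable (heatTerm p) := by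
  obtain ⟨N, hN⟩ := lap_eventually_zero p
  refine summable_of_ne_finset_zero (s := Finset.range N) fun j hj => ?_
  rw [heatTerm, lap_iterate_zero_of_le hN (by simpa using hj)]
  simp

lemma tsum_heatTerm_add (p q : MvPolynomial (Fin m) ℝ) :
    ∑' j, heatTerm (p + q) j = ∑' j, heatTerm p j + ∑' j, heatTerm q j := by
  rw [← (summable_heatTerm p).tsum_add (summable_heatTerm q)]
  congr 1 with j
  simp [heatTerm, lap_iterate_add, mul_add]

lemma tsum_heatTerm_C (a : ℝ) : ∑' j, heatTerm (C a : MvPolynomial (Fin m) ℝ) j = a := by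
  rw [tsum_eq_single 0]
  · simp [heatTerm]
  · intro j hj
    rw [heatTerm, lap_iterate_zero_of_le (N := 1) (lap_C a) (Nat.one_le_iff_ne_zero.mpr hj)]
    simp

lemma tsum_heatTerm_X_mul (i : Fin m) (q : MvPolynomial (Fin m) ℝ) :
    ∑' j, heatTerm (X i * q) j = ∑' j, heatTerm (pderiv i q) j := by
  rw [(summable_heatTerm (X i * q)).tsum_eq_zero_add]
  have h0 : heatTerm (X i * q) 0 = 0 := by simp [heatTerm]
  rw [h0, zero_add]
  congr 1 with j
  have hj : (Nat.factorial j : ℝ) ≠ 0 := by positivity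
  have hj' : (j : ℝ) + 1 ≠ 0 := by positivity
  simp only [heatTerm, lap_iterate_X_mul, Nat.factorial_succ]
  simp only [map_add, map_mul, eval_X, Pi.zero_apply, zero_mul, zero_add, nsmul_eq_mul,
    map_natCast]
  push_cast
  field_simp
  ring

/-! ### The Gaussian functional -/

/-- The Gaussian-weighted polynomial function `e^{-‖x‖²/2} p(x)`. -/
noncomputable def gaussFun (p : MvPolynomial (Fin m) ℝ) (x : EuclideanSpace ℝ (Fin m)) : ℝ :=
  Real.exp (-‖x‖ ^ 2 / 2) * eval (fun i => x i) p

lemma gaussFun_add (p q : MvPolynomial (Fin m) ℝ) :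
    gaussFun (p + q) = gaussFun p + gaussFun q := by
  ext x; simp [gaussFun, mul_add]

lemma integrable_pow_mul_exp (n : ℕ) :
    Integrable fun x : ℝ => Real.exp (-x ^ 2 / 2) * x ^ n := by
  have h := integrable_rpow_mul_exp_neg_mul_sq (b := 1 / 2) (by norm_num) (s := (n : ℝ))
    (by have : (0 : ℝ) ≤ n := by positivity
        linarith)
  refine h.congr (Filter.Eventually.of_forall fun x => ?_)
  simp only [Real.rpow_natCast]
  rw [mul_comm]
  congr 2
  ring

lemma gaussFun_monomial (s : Fin m →₀ ℕ) (a : ℝ) (x : EuclideanSpace ℝ (Fin m)) :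
    gaussFun (monomial s a) x = a * ∏ i, (Real.exp (-(x i) ^ 2 / 2) * (x i) ^ (s i)) := by
  rw [gaussFun, eval_monomial, Finsupp.prod_fintype _ _ (by simp), Finset.prod_mul_distrib,
    ← Real.exp_sum, EuclideanSpace.real_norm_sq_eq, ← Finset.sum_div, Finset.sum_neg_distrib]
  ring

lemma integrable_gaussFun (p : MvPolynomial (Fin m) ℝ) : Integrable (gaussFun p) := by
  induction p using MvPolynomial.induction_on' with
  | add p q hp hq => rw [gaussFun_add]; exact hp.add hq
  | monomial s a =>
    have h : Integrable fun x : Fin m → ℝ =>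
        ∏ i, (fun t : ℝ => Real.exp (-t ^ 2 / 2) * t ^ (s i)) (x i) :=
      Integrable.fintype_prod (f := fun i (t : ℝ) => Real.exp (-t ^ 2 / 2) * t ^ (s i))
        fun i => integrable_pow_mul_exp (s i)
    have h2 := ((PiLp.volume_preserving_ofLp (Fin m)).integrable_comp
      h.aestronglyMeasurable).mpr h
    exact (h2.const_mul a).congr (Filter.Eventually.of_forall fun x =>
      (gaussFun_monomial s a x).symm)

/-- The formal partial derivative of a polynomial is its line derivative along the corresponding
coordinate vector. -/
lemma hasLineDerivAt_eval (i : Fin m) (q : MvPolynomial (Fin m) ℝ)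
    (x : EuclideanSpace ℝ (Fin m)) :
    HasLineDerivAt ℝ (fun y : EuclideanSpace ℝ (Fin m) => eval (fun k => y k) q)
      (eval (fun k => x k) (pderiv i q)) x (EuclideanSpace.single i 1) := by
  unfold HasLineDerivAt
  induction q using MvPolynomial.induction_on with
  | C a => simpa using hasDerivAt_const (0 : ℝ) a
  | add p q hp hq => simpa using hp.fun_add hq
  | mul_X p j hp =>
    have hX : HasDerivAt (fun t : ℝ => (x + t • EuclideanSpace.single i (1 : ℝ)) j)
        (eval (fun k => x k) (pderiv i (X j : MvPolynomial (Fin m) ℝ))) 0 := by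
      by_cases hj : j = i
      · subst hj
        simpa using (hasDerivAt_id (0 : ℝ)).const_add (x j)
      · simpa [hj, pderiv_X_of_ne hj] using hasDerivAt_const (0 : ℝ) (x j)
    have := hp.fun_mul hX
    rw [pderiv_mul]
    simpa using this

lemma hasLineDerivAt_gauss (i : Fin m) (x : EuclideanSpace ℝ (Fin m)) :
    HasLineDerivAt ℝ (fun y : EuclideanSpace ℝ (Fin m) => Real.exp (-‖y‖ ^ 2 / 2))
      (-(Real.exp (-‖x‖ ^ 2 / 2) * x i)) x (EuclideanSpace.single i 1) := by
  have h := ((hasStrictFDerivAt_norm_sq x).hasFDerivAt.hasLineDerivAt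
    (EuclideanSpace.single i 1))
  unfold HasLineDerivAt at h ⊢
  refine (h.fun_neg.div_const 2).exp.congr_deriv ?_
  simp [EuclideanSpace.inner_single_right]
  ring

/-- Integration by parts along the `i`-th coordinate. -/
lemma integral_gaussFun_X_mul (i : Fin m) (q : MvPolynomial (Fin m) ℝ) :
    ∫ x, gaussFun (X i * q) x = ∫ x, gaussFun (pderiv i q) x := by
  have hxq : ∀ x : EuclideanSpace ℝ (Fin m), -(Real.exp (-‖x‖ ^ 2 / 2) * x i) *
      eval (fun k => x k) q = -gaussFun (X i * q) x := by
    intro x; simp [gaussFun]; ring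
  have h := integral_bilinear_hasLineDerivAt_right_eq_neg_left_of_integrable
    (μ := (volume : Measure (EuclideanSpace ℝ (Fin m)))) (B := ContinuousLinearMap.mul ℝ ℝ)
    (f := fun y => Real.exp (-‖y‖ ^ 2 / 2))
    (f' := fun x => -(Real.exp (-‖x‖ ^ 2 / 2) * x i))
    (g := fun y => eval (fun k => y k) q)
    (g' := fun x => eval (fun k => x k) (pderiv i q))
    (v := EuclideanSpace.single i 1)
    (by simp only [ContinuousLinearMap.mul_apply', hxq]
        exact (integrable_gaussFun (X i * q)).neg)
    (integrable_gaussFun (pderiv i q)) (integrable_gaussFun q)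
    (fun x _ => hasLineDerivAt_gauss i x) (fun x _ => hasLineDerivAt_eval i q x)
  simp only [ContinuousLinearMap.mul_apply', hxq, integral_neg, neg_neg] at h
  exact h.symm

/-- The total Gaussian mass `(2π)^{m/2}` normalizes the functional on constants. -/
lemma integral_gaussFun_C (a : ℝ) :
    (2 * Real.pi) ^ (-(m : ℝ) / 2) * ∫ x, gaussFun (C a : MvPolynomial (Fin m) ℝ) x = a := by
  have h := GaussianFourier.integral_rexp_neg_mul_sq_norm
    (V := EuclideanSpace ℝ (Fin m)) (b := 1 / 2) (by norm_num)
  have e : ∀ x : EuclideanSpace ℝ (Fin m),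
      gaussFun (C a) x = Real.exp (-(1 / 2) * ‖x‖ ^ 2) * a := by
    intro x
    simp only [gaussFun, eval_C]
    congr 2
    ring
  simp only [e]
  have hpi : Real.pi / (1 / 2) = 2 * Real.pi := by ring
  rw [integral_mul_const, h, hpi, finrank_euclideanSpace, Fintype.card_fin, ← mul_assoc,
    ← Real.rpow_add (by positivity), neg_div, neg_add_cancel, Real.rpow_zero, one_mul]

end GaussPoly

/-- Integration of a polynomial against the Gaussian probability density:
`∑_{j≥0} (1/(2^j j!)) (L^j p)(0) = (2π)^{-m/2} ∫_{ℝ^m} e^{-‖x‖²/2} p(x) dx`. -/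
theorem gaussian_integration_of_polynomials (m : ℕ) (hm : 1 ≤ m)
    (p : MvPolynomial (Fin m) ℝ) :
    ∑' j : ℕ, (1 / (2 ^ j * (Nat.factorial j) : ℝ)) *
        MvPolynomial.eval (0 : Fin m → ℝ) ((lap m)^[j] p) =
      (2 * Real.pi) ^ (-(m : ℝ) / 2) *
        ∫ x : EuclideanSpace ℝ (Fin m),
          Real.exp (-‖x‖ ^ 2 / 2) * MvPolynomial.eval (fun i => x i) p := by
  refine GaussPoly.eq_of_X_mul_eq_pderiv
    (A := fun p => ∑' j, GaussPoly.heatTerm p j)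
    (B := fun p => (2 * Real.pi) ^ (-(m : ℝ) / 2) * ∫ x, GaussPoly.gaussFun p x)
    GaussPoly.tsum_heatTerm_add (fun p q => ?_) (fun a => ?_) GaussPoly.tsum_heatTerm_X_mul
    (fun i q => ?_) p
  · simp only [GaussPoly.gaussFun_add]
    rw [integral_add' (GaussPoly.integrable_gaussFun p) (GaussPoly.integrable_gaussFun q), mul_add]
  · simp only [GaussPoly.tsum_heatTerm_C, GaussPoly.integral_gaussFun_C]
  · simp only [GaussPoly.integral_gaussFun_X_mul]
end

section
/- Let m ≥ 2 and let p : ℝ^m → ℝ be a homogeneous polynomial. If p is homogeneous of even degree 2κ, then (1/Vol(S^{m-1})) ∫_{S^{m-1}} p(x) dS(x) = (L^κ p)(0) / (4^κ · κ! · [m/2 + κ − 1]_κ), where L := ∑_{μ=1}^m ∂²/∂x_μ². If p is homogeneous of odd degree, then ∫_{S^{m-1}} p(x) dS(x) = 0. -/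
/-!
The argument uses only that the Hausdorff measure of the sphere is finite, nonzero and invariant
under orthogonal maps. Invariance under `x ↦ -x` kills polynomials of odd degree.

For even degree, differentiating the invariance under rotations in the plane `(x_i, x_j)` shows
that `(x_i ∂_j - x_j ∂_i) q` has integral zero over the sphere for every polynomial `q`
(`sphInt_angDer`). Taking `q = x_i ∂_j p` and summing over `i, j`, Euler's identity gives
`|x|² L p - d (d + m - 2) p` when `p` is homogeneous of degree `d` (`sum_angDer`). As `|x|² = 1` on
the sphere, `∫ L p = d (d + m - 2) ∫ p` (`sphInt_lap`). Iterating down to degree `0` proves the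
formula, since `∏_{j=1}^κ 2j (2j + m - 2) = 4^κ κ! [m/2 + κ - 1]_κ`.

Finiteness of the measure follows by covering the sphere with the central projections of the faces
of a cube, which are `C¹` images of compact cubes in `ℝ^{m-1}`; positivity follows by projecting
the sphere onto `ℝ^{m-1}` by a `1`-Lipschitz map.
-/

open MeasureTheory
open scoped Real

/-- The falling factorial `[x]_s = x(x−1)⋯(x−s+1)`. -/
noncomputable def fall (x : ℝ) (s : ℕ) : ℝ := ∏ j ∈ Finset.range s, (x - (j : ℝ))

/-! ### Finiteness and positivity of the measure of the sphere -/

/-- The central projection to the unit sphere of the hyperplane `x_i = s`, in the coordinates `u` of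
that hyperplane. For `s = ±1` and `u ∈ [-1, 1]^n` this parametrizes the projection of a face of the
cube `[-1, 1]^{n+1}`. -/
noncomputable def cubeFace (n : ℕ) (i : Fin (n + 1)) (s : ℝ) (u : Fin n → ℝ) :
    EuclideanSpace ℝ (Fin (n + 1)) :=
  let y : EuclideanSpace ℝ (Fin (n + 1)) := WithLp.toLp 2 (i.insertNth s u)
  ‖y‖⁻¹ • y

lemma contDiff_cubeFace (n : ℕ) (i : Fin (n + 1)) (s : ℝ) (hs : s ≠ 0) :
    ContDiff ℝ 1 (cubeFace n i s) := by
  have h1 : ContDiff ℝ 1 (fun u : Fin n → ℝ =>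
      (WithLp.toLp 2 (i.insertNth s u : Fin (n + 1) → ℝ) : EuclideanSpace ℝ (Fin (n + 1)))) := by
    rw [contDiff_euclidean]
    intro k
    rcases Fin.eq_self_or_eq_succAbove i k with rfl | ⟨j, rfl⟩
    · simpa using contDiff_const
    · simpa using contDiff_apply ℝ ℝ j
  have h0 : ∀ u : Fin n → ℝ, (WithLp.toLp 2 (i.insertNth s u : Fin (n + 1) → ℝ) :
      EuclideanSpace ℝ (Fin (n + 1))) ≠ 0 := by
    intro u h
    have := congrArg (fun z : EuclideanSpace ℝ (Fin (n + 1)) => z i) h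
    simp [hs] at this
  exact ((h1.norm ℝ h0).inv (fun u => norm_ne_zero_iff.2 (h0 u))).smul h1

/-- A point `x` of the sphere is the projection of `x / |x_i|`, where `|x_i|` is maximal. -/
lemma sphere_subset_cubeFaces (n : ℕ) :
    Metric.sphere (0 : EuclideanSpace ℝ (Fin (n + 1))) 1 ⊆
      ⋃ i : Fin (n + 1), (cubeFace n i 1 '' Metric.closedBall 0 1 ∪
        cubeFace n i (-1) '' Metric.closedBall 0 1) := by
  intro x hx
  have hx1 : ‖x‖ = 1 := by simpa using hx
  obtain ⟨i, -, hi⟩ := Finset.exists_max_image Finset.univ (fun k => |x k|) Finset.univ_nonempty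
  have hpos : 0 < |x i| := by
    by_contra h
    have h0 : x = 0 := by
      ext k
      have := hi k (Finset.mem_univ k)
      have h2 := abs_nonneg (x k)
      exact abs_eq_zero.1 (by linarith)
    simp [h0] at hx1
  set u : Fin n → ℝ := fun j => |x i|⁻¹ * x (i.succAbove j) with hu
  have hub : u ∈ Metric.closedBall (0 : Fin n → ℝ) 1 := by
    rw [mem_closedBall_zero_iff, pi_norm_le_iff_of_nonneg zero_le_one]
    intro j
    rw [hu, Real.norm_eq_abs, abs_mul, abs_inv, abs_abs, inv_mul_le_one₀ hpos]
    exact hi _ (Finset.mem_univ _)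
  have key : ∀ s : ℝ, s = |x i|⁻¹ * x i → cubeFace n i s u = x := by
    intro s hs
    have hy : (WithLp.toLp 2 (i.insertNth s u : Fin (n + 1) → ℝ) :
        EuclideanSpace ℝ (Fin (n + 1))) = |x i|⁻¹ • x := by
      ext k
      rcases Fin.eq_self_or_eq_succAbove i k with rfl | ⟨j, rfl⟩
      · simp [hs]
      · simp [hu]
    simp only [cubeFace, hy, norm_smul, hx1, smul_smul, norm_inv, Real.norm_eq_abs, abs_abs]
    rw [mul_one, inv_inv, mul_inv_cancel₀ hpos.ne', one_smul]
  refine Set.mem_iUnion.2 ⟨i, ?_⟩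
  rcases le_total 0 (x i) with h | h
  · left
    refine ⟨u, hub, key _ ?_⟩
    rw [abs_of_nonneg h] at hpos ⊢
    field_simp
  · right
    refine ⟨u, hub, key _ ?_⟩
    rw [abs_of_nonpos h] at hpos ⊢
    have : x i ≠ 0 := by linarith
    field_simp

lemma hausdorffMeasure_cubeFace_lt_top (n : ℕ) (i : Fin (n + 1)) (s : ℝ) (hs : s ≠ 0) :
    μH[(n : ℝ)] (cubeFace n i s '' Metric.closedBall 0 1) < ⊤ := by
  obtain ⟨K, hK⟩ := ((contDiff_cubeFace n i s hs).contDiffOn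
    (s := Metric.closedBall 0 1)).exists_lipschitzOnWith one_ne_zero
    (convex_closedBall 0 1) (isCompact_closedBall 0 1)
  refine (hK.hausdorffMeasure_image_le (Nat.cast_nonneg n)).trans_lt ?_
  have : (μH[(n : ℝ)] : Measure (Fin n → ℝ)) = volume := by
    simpa using hausdorffMeasure_pi_real (ι := Fin n)
  rw [this]
  exact ENNReal.mul_lt_top (ENNReal.rpow_lt_top_of_nonneg (Nat.cast_nonneg n) ENNReal.coe_ne_top)
    (isCompact_closedBall 0 1).measure_lt_top

lemma hausdorffMeasure_sphere_lt_top (n : ℕ) :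
    μH[(n : ℝ)] (Metric.sphere (0 : EuclideanSpace ℝ (Fin (n + 1))) 1) < ⊤ := by
  refine (measure_mono (sphere_subset_cubeFaces n)).trans_lt ?_
  refine (measure_iUnion_fintype_le _ _).trans_lt (ENNReal.sum_lt_top.2 fun i _ => ?_)
  exact (measure_union_le _ _).trans_lt (ENNReal.add_lt_top.2
    ⟨hausdorffMeasure_cubeFace_lt_top n i 1 one_ne_zero,
      hausdorffMeasure_cubeFace_lt_top n i (-1) (by norm_num)⟩)

/-- Forgetting one coordinate is `1`-Lipschitz and maps the sphere onto a set containing the open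
unit ball of `ℝ^n`, whose Lebesgue measure is positive. -/
lemma hausdorffMeasure_sphere_pos (n : ℕ) :
    0 < μH[(n : ℝ)] (Metric.sphere (0 : EuclideanSpace ℝ (Fin (n + 1))) 1) := by
  have hvol : (μH[(n : ℝ)] : Measure (Fin n → ℝ)) = volume := by
    simpa using hausdorffMeasure_pi_real (ι := Fin n)
  let q : EuclideanSpace ℝ (Fin (n + 1)) → (Fin n → ℝ) := fun x k => x k.succ
  have hq : LipschitzWith 1 q := by
    refine LipschitzWith.of_dist_le_mul fun x y => ?_
    rw [NNReal.coe_one, one_mul, dist_pi_le_iff dist_nonneg]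
    intro k
    rw [dist_eq_norm, dist_eq_norm]
    exact PiLp.norm_apply_le (x - y) k.succ
  have hle := hq.hausdorffMeasure_image_le (Nat.cast_nonneg n)
    (Metric.sphere (0 : EuclideanSpace ℝ (Fin (n + 1))) 1)
  rw [ENNReal.coe_one, ENNReal.one_rpow, one_mul, hvol] at hle
  refine lt_of_lt_of_le ?_ hle
  have hsub : {u : Fin n → ℝ | ∑ k, u k ^ 2 < 1} ⊆
      q '' Metric.sphere (0 : EuclideanSpace ℝ (Fin (n + 1))) 1 := by
    intro u hu
    have hu' : ∑ k, u k ^ 2 < 1 := hu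
    refine ⟨WithLp.toLp 2 (Fin.cons (√(1 - ∑ k, u k ^ 2)) u), ?_, ?_⟩
    · rw [mem_sphere_zero_iff_norm, EuclideanSpace.norm_eq, Real.sqrt_eq_one, Fin.sum_univ_succ]
      simp only [Fin.cons_zero, Fin.cons_succ, Real.norm_eq_abs, sq_abs]
      rw [Real.sq_sqrt (by linarith)]
      ring
    · ext k
      simp [q]
  refine lt_of_lt_of_le (IsOpen.measure_pos volume ?_ ⟨0, by simp⟩) (measure_mono hsub)
  exact isOpen_lt (by fun_prop) continuous_const

/-! ### Rotations in coordinate planes -/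

/-- Rotation by the angle `t` in the coordinate plane `(x_i, x_j)`. -/
noncomputable def planeRot (m : ℕ) (i j : Fin m) (t : ℝ) (x : EuclideanSpace ℝ (Fin m)) :
    EuclideanSpace ℝ (Fin m) :=
  WithLp.toLp 2 fun k => if k = i then Real.cos t * x i - Real.sin t * x j
    else if k = j then Real.sin t * x i + Real.cos t * x j else x k

lemma planeRot_apply (m : ℕ) (i j : Fin m) (t : ℝ) (x : EuclideanSpace ℝ (Fin m)) (k : Fin m) :
    planeRot m i j t x k = if k = i then Real.cos t * x i - Real.sin t * x j
    else if k = j then Real.sin t * x i + Real.cos t * x j else x k := rfl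

lemma planeRot_neg_planeRot (m : ℕ) {i j : Fin m} (hij : i ≠ j) (t : ℝ)
    (x : EuclideanSpace ℝ (Fin m)) : planeRot m i j t (planeRot m i j (-t) x) = x := by
  ext k
  have h := Real.sin_sq_add_cos_sq t
  simp only [planeRot_apply, Real.cos_neg, Real.sin_neg, if_true, if_neg hij.symm]
  split_ifs with h1 h2
  · subst h1; linear_combination (x k) * h
  · subst h2; linear_combination (x k) * h
  · rfl

lemma norm_planeRot (m : ℕ) {i j : Fin m} (hij : i ≠ j) (t : ℝ)
    (x : EuclideanSpace ℝ (Fin m)) : ‖planeRot m i j t x‖ = ‖x‖ := by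
  rw [EuclideanSpace.norm_eq, EuclideanSpace.norm_eq]
  congr 1
  simp only [Real.norm_eq_abs, sq_abs]
  rw [← sub_eq_zero, ← Finset.sum_sub_distrib]
  have hterm : ∀ k, planeRot m i j t x k ^ 2 - x k ^ 2 =
      (if k = i then (Real.cos t * x i - Real.sin t * x j) ^ 2 - x i ^ 2 else 0) +
      (if k = j then (Real.sin t * x i + Real.cos t * x j) ^ 2 - x j ^ 2 else 0) := by
    intro k
    rw [planeRot_apply]
    by_cases h1 : k = i
    · subst h1; simp [hij]
    · by_cases h2 : k = j
      · subst h2; simp [h1]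
      · simp [h1, h2]
  simp only [hterm, Finset.sum_add_distrib, Finset.sum_ite_eq', Finset.mem_univ, if_true]
  have h := Real.sin_sq_add_cos_sq t
  linear_combination (x i ^ 2 + x j ^ 2) * h

lemma planeRot_sub (m : ℕ) (i j : Fin m) (t : ℝ) (x y : EuclideanSpace ℝ (Fin m)) :
    planeRot m i j t x - planeRot m i j t y = planeRot m i j t (x - y) := by
  ext k
  simp only [planeRot_apply, PiLp.sub_apply]
  split_ifs <;> ring

/-- `planeRot` as an isometry of Euclidean space; the inverse is the rotation by `-t`. -/
noncomputable def planeRotEquiv (m : ℕ) {i j : Fin m} (hij : i ≠ j) (t : ℝ) :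
    EuclideanSpace ℝ (Fin m) ≃ᵢ EuclideanSpace ℝ (Fin m) where
  toFun := planeRot m i j t
  invFun := planeRot m i j (-t)
  left_inv x := by simpa using planeRot_neg_planeRot m hij (-t) x
  right_inv x := planeRot_neg_planeRot m hij t x
  isometry_toFun := Isometry.of_dist_eq fun x y => by
    rw [dist_eq_norm, dist_eq_norm, planeRot_sub, norm_planeRot m hij]

/-- Invariance of the Hausdorff measure on the sphere under norm-preserving isometries. -/
lemma setIntegral_sphere_comp_isometryEquiv (m : ℕ) (d : ℝ)
    (e : EuclideanSpace ℝ (Fin m) ≃ᵢ EuclideanSpace ℝ (Fin m)) (he : ∀ x, ‖e x‖ = ‖x‖)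
    (f : EuclideanSpace ℝ (Fin m) → ℝ) :
    ∫ x in Metric.sphere (0 : EuclideanSpace ℝ (Fin m)) 1, f (e x) ∂(μH[d]) =
      ∫ x in Metric.sphere (0 : EuclideanSpace ℝ (Fin m)) 1, f x ∂(μH[d]) := by
  have h := (e.measurePreserving_hausdorffMeasure d).setIntegral_preimage_emb
    e.toHomeomorph.measurableEmbedding f (Metric.sphere (0 : EuclideanSpace ℝ (Fin m)) 1)
  rw [← h]
  congr 2
  ext x
  rw [Set.mem_preimage, mem_sphere_zero_iff_norm, mem_sphere_zero_iff_norm, he]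

/-! ### Derivatives of polynomials along rotations -/

lemma hasDerivAt_eval_mvPolynomial (m : ℕ) (p : MvPolynomial (Fin m) ℝ) (y : ℝ → Fin m → ℝ)
    (y' : Fin m → ℝ) (t : ℝ) (hy : ∀ k, HasDerivAt (fun s => y s k) (y' k) t) :
    HasDerivAt (fun s => MvPolynomial.eval (y s) p)
      (∑ k, y' k * MvPolynomial.eval (y t) (MvPolynomial.pderiv k p)) t := by
  induction p using MvPolynomial.induction_on with
  | C a => simpa using hasDerivAt_const t a
  | add p q hp hq =>
    simp only [map_add, mul_add, Finset.sum_add_distrib]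
    exact hp.add hq
  | mul_X p k hp =>
    have h := hp.mul (hy k)
    simp only [map_mul, MvPolynomial.eval_X]
    refine h.congr_deriv ?_
    have hterm : ∀ l, y' l * MvPolynomial.eval (y t)
        (MvPolynomial.pderiv l (p * MvPolynomial.X k)) =
        y' l * MvPolynomial.eval (y t) (MvPolynomial.pderiv l p) * y t k +
          (if l = k then MvPolynomial.eval (y t) p * y' k else 0) := by
      intro l
      rw [Derivation.leibniz, MvPolynomial.pderiv_X]
      by_cases hl : l = k
      · subst hl
        simp
        ring
      · simp [hl]
        ring
    rw [Finset.sum_congr rfl fun l _ => hterm l, Finset.sum_add_distrib, ← Finset.sum_mul]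
    simp

lemma continuous_eval_euclidean (m : ℕ) (p : MvPolynomial (Fin m) ℝ) :
    Continuous fun x : EuclideanSpace ℝ (Fin m) => MvPolynomial.eval (fun i => x i) p :=
  (MvPolynomial.continuous_eval p).comp (by fun_prop)

/-- The derivation `x_i ∂_j - x_j ∂_i`, the infinitesimal generator of the rotations in the
coordinate plane `(x_i, x_j)`. -/
noncomputable def angDer (m : ℕ) (i j : Fin m) (p : MvPolynomial (Fin m) ℝ) :
    MvPolynomial (Fin m) ℝ :=
  MvPolynomial.X i * MvPolynomial.pderiv j p - MvPolynomial.X j * MvPolynomial.pderiv i p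

lemma hasDerivAt_eval_planeRot (m : ℕ) {i j : Fin m} (hij : i ≠ j)
    (p : MvPolynomial (Fin m) ℝ) (x : EuclideanSpace ℝ (Fin m)) (t : ℝ) :
    HasDerivAt (fun s => MvPolynomial.eval (fun k => planeRot m i j s x k) p)
      (MvPolynomial.eval (fun k => planeRot m i j t x k) (angDer m i j p)) t := by
  have hy : ∀ k, HasDerivAt (fun s => planeRot m i j s x k)
      ((if k = i then -planeRot m i j t x j else 0) +
        (if k = j then planeRot m i j t x i else 0)) t := by
    intro k
    simp only [planeRot_apply, if_true, if_neg hij.symm]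
    by_cases h1 : k = i
    · subst h1
      simp only [if_true, if_neg hij]
      refine (((Real.hasDerivAt_cos t).mul_const (x k)).sub
        ((Real.hasDerivAt_sin t).mul_const (x j))).congr_deriv ?_
      ring
    · by_cases h2 : k = j
      · subst h2
        simp only [if_true, if_neg h1]
        refine (((Real.hasDerivAt_sin t).mul_const (x i)).add
          ((Real.hasDerivAt_cos t).mul_const (x k))).congr_deriv ?_
        ring
      · simpa [h1, h2] using hasDerivAt_const t (x k)
  refine (hasDerivAt_eval_mvPolynomial m p (fun s k => planeRot m i j s x k) _ t hy).congr_deriv ?_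
  simp [add_mul, Finset.sum_add_distrib, angDer]
  ring

/-! ### The recursion for integrals over the sphere -/

section
variable (n : ℕ)

/-- The integral of a polynomial over the unit sphere of `ℝ^{n+1}`. -/
noncomputable def sphInt (p : MvPolynomial (Fin (n + 1)) ℝ) : ℝ :=
  ∫ x in Metric.sphere (0 : EuclideanSpace ℝ (Fin (n + 1))) 1,
    MvPolynomial.eval (fun i => x i) p ∂(μH[(n : ℝ)])

instance isFiniteMeasure_restrict_sphere : IsFiniteMeasure
    ((μH[(n : ℝ)]).restrict (Metric.sphere (0 : EuclideanSpace ℝ (Fin (n + 1))) 1)) :=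
  ⟨by simpa using hausdorffMeasure_sphere_lt_top n⟩

lemma exists_bound_eval_sphere (p : MvPolynomial (Fin (n + 1)) ℝ) :
    ∃ C, ∀ x ∈ Metric.sphere (0 : EuclideanSpace ℝ (Fin (n + 1))) 1,
      ‖MvPolynomial.eval (fun i => x i) p‖ ≤ C :=
  (isCompact_sphere _ _).exists_bound_of_continuousOn (continuous_eval_euclidean _ p).continuousOn

lemma integrableOn_eval_sphere (p : MvPolynomial (Fin (n + 1)) ℝ) :
    IntegrableOn (fun x : EuclideanSpace ℝ (Fin (n + 1)) => MvPolynomial.eval (fun i => x i) p)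
      (Metric.sphere 0 1) (μH[(n : ℝ)]) := by
  obtain ⟨C, hC⟩ := exists_bound_eval_sphere n p
  exact Integrable.of_bound (continuous_eval_euclidean _ p).aestronglyMeasurable C
    ((ae_restrict_iff' Metric.isClosed_sphere.measurableSet).2 (Filter.Eventually.of_forall hC))

lemma sphInt_sub (p q : MvPolynomial (Fin (n + 1)) ℝ) :
    sphInt n (p - q) = sphInt n p - sphInt n q := by
  simp only [sphInt, map_sub]
  exact integral_sub (integrableOn_eval_sphere n p) (integrableOn_eval_sphere n q)

lemma sphInt_C_mul (c : ℝ) (p : MvPolynomial (Fin (n + 1)) ℝ) :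
    sphInt n (MvPolynomial.C c * p) = c * sphInt n p := by
  simp only [sphInt, map_mul, MvPolynomial.eval_C]
  exact integral_const_mul _ _

lemma sphInt_sum {ι : Type*} (s : Finset ι) (p : ι → MvPolynomial (Fin (n + 1)) ℝ) :
    sphInt n (∑ i ∈ s, p i) = ∑ i ∈ s, sphInt n (p i) := by
  simp only [sphInt, map_sum]
  exact integral_finsetSum _ fun i _ => integrableOn_eval_sphere n (p i)

/-- Differentiating `∫ p (R_t x) = ∫ p` at `t = 0` for the rotations `R_t` in a coordinate plane. -/
lemma sphInt_angDer (i j : Fin (n + 1)) (p : MvPolynomial (Fin (n + 1)) ℝ) :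
    sphInt n (angDer (n + 1) i j p) = 0 := by
  by_cases hij : i = j
  · simp [hij, angDer, sphInt]
  obtain ⟨C, hC⟩ := exists_bound_eval_sphere n (angDer (n + 1) i j p)
  have hcont : ∀ (t : ℝ) (q : MvPolynomial (Fin (n + 1)) ℝ),
      Continuous fun x : EuclideanSpace ℝ (Fin (n + 1)) =>
        MvPolynomial.eval (fun k => planeRot (n + 1) i j t x k) q := fun t q =>
    (continuous_eval_euclidean _ q).comp (planeRotEquiv (n + 1) hij t).continuous
  have hrot : ∀ (t : ℝ) (q : MvPolynomial (Fin (n + 1)) ℝ),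
      ∫ x in Metric.sphere (0 : EuclideanSpace ℝ (Fin (n + 1))) 1,
        MvPolynomial.eval (fun k => planeRot (n + 1) i j t x k) q ∂(μH[(n : ℝ)]) = sphInt n q :=
    fun t q => setIntegral_sphere_comp_isometryEquiv (n + 1) n (planeRotEquiv (n + 1) hij t)
      (norm_planeRot _ hij t) (fun x => MvPolynomial.eval (fun k => x k) q)
  have hrot0 : ∀ x : EuclideanSpace ℝ (Fin (n + 1)), planeRot (n + 1) i j 0 x = x := by
    intro x
    ext k
    simp only [planeRot_apply, Real.cos_zero, Real.sin_zero]
    split_ifs with h1 h2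
    · subst h1; ring
    · subst h2; ring
    · rfl
  have hd := (hasDerivAt_integral_of_dominated_loc_of_deriv_le
    (μ := (μH[(n : ℝ)]).restrict (Metric.sphere (0 : EuclideanSpace ℝ (Fin (n + 1))) 1))
    (F := fun t x => MvPolynomial.eval (fun k => planeRot (n + 1) i j t x k) p)
    (F' := fun t x => MvPolynomial.eval (fun k => planeRot (n + 1) i j t x k)
      (angDer (n + 1) i j p))
    (x₀ := (0 : ℝ)) (s := Set.univ) (bound := fun _ => C) Filter.univ_mem
    (Filter.Eventually.of_forall fun t => (hcont t p).aestronglyMeasurable)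
    (by simp only [hrot0]; exact integrableOn_eval_sphere n p)
    (hcont 0 _).aestronglyMeasurable
    ((ae_restrict_iff' Metric.isClosed_sphere.measurableSet).2
      (Filter.Eventually.of_forall fun x hx t _ => hC _ (by
        rw [mem_sphere_zero_iff_norm] at hx ⊢
        rw [norm_planeRot _ hij, hx])))
    (integrable_const C)
    (Filter.Eventually.of_forall fun x t _ => hasDerivAt_eval_planeRot _ hij p x t)).2
  simp only [hrot] at hd
  exact hd.unique (hasDerivAt_const _ _)

open MvPolynomial in
/-- `∑_{i,j} (x_i ∂_j - x_j ∂_i)(x_i ∂_j p) = |x|² L p - d (d + m - 2) p` for `p` homogeneous of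
degree `d` in `m = n + 1` variables. -/
lemma sum_angDer (d : ℕ) (p : MvPolynomial (Fin (n + 1)) ℝ) (hp : p.IsHomogeneous (d + 1)) :
    ∑ j, ∑ i, angDer (n + 1) i j (X i * pderiv j p) =
      (∑ i, X i ^ 2) * lap (n + 1) p - C (((d : ℝ) + 1) * (d + n)) * p := by
  have hE := hp.sum_X_mul_pderiv
  have hE' : ∀ j, ∑ i, X i * pderiv i (pderiv j p) = d • pderiv j p := fun j => by
    simpa using (hp.pderiv (i := j)).sum_X_mul_pderiv
  have hterm : ∀ i j, angDer (n + 1) i j (X i * pderiv j p) =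
      X i ^ 2 * pderiv j (pderiv j p) + (if i = j then X j * pderiv j p else 0)
        - X j * pderiv j p - X j * (X i * pderiv i (pderiv j p)) := by
    intro i j
    simp only [angDer, Derivation.leibniz, smul_eq_mul, pderiv_X_self]
    by_cases h : i = j
    · subst h
      simp
      ring
    · rw [pderiv_X_of_ne h]
      simp [h]
      ring
  have hinner : ∀ j, ∑ i, angDer (n + 1) i j (X i * pderiv j p) =
      (∑ i, X i ^ 2) * pderiv j (pderiv j p) - C ((d : ℝ) + n) * (X j * pderiv j p) := by
    intro j
    rw [Finset.sum_congr rfl fun i _ => hterm i j, Finset.sum_sub_distrib,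
      Finset.sum_sub_distrib, Finset.sum_add_distrib, ← Finset.sum_mul,
      ← Finset.mul_sum (f := fun i => X i * pderiv i (pderiv j p)), hE' j]
    simp
    ring
  rw [Finset.sum_congr rfl fun j _ => hinner j, Finset.sum_sub_distrib, ← Finset.mul_sum,
    ← Finset.mul_sum, hE, lap]
  simp
  ring

/-- Integrated form of `sum_angDer`, using `|x|² = 1` on the sphere. -/
lemma sphInt_lap (d : ℕ) (p : MvPolynomial (Fin (n + 1)) ℝ) (hp : p.IsHomogeneous (d + 1)) :
    sphInt n (lap (n + 1) p) = ((d : ℝ) + 1) * (d + n) * sphInt n p := by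
  have h0 : sphInt n (∑ j, ∑ i, angDer (n + 1) i j
      (MvPolynomial.X i * MvPolynomial.pderiv j p)) = 0 := by
    simp [sphInt_sum, sphInt_angDer]
  rw [sum_angDer n d p hp, sphInt_sub, sphInt_C_mul] at h0
  have h1 : sphInt n ((∑ i, MvPolynomial.X i ^ 2) * lap (n + 1) p) = sphInt n (lap (n + 1) p) := by
    refine setIntegral_congr_fun Metric.isClosed_sphere.measurableSet fun x hx => ?_
    have hx2 : ∑ i, x i ^ 2 = 1 := by
      rw [mem_sphere_zero_iff_norm, EuclideanSpace.norm_eq, Real.sqrt_eq_one] at hx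
      simpa using hx
    simp [hx2]
  rw [h1] at h0
  linarith

lemma isHomogeneous_lap (d : ℕ) (p : MvPolynomial (Fin (n + 1)) ℝ)
    (hp : p.IsHomogeneous (d + 2)) : (lap (n + 1) p).IsHomogeneous d :=
  MvPolynomial.IsHomogeneous.sum _ _ _ fun i _ => by
    simpa using (hp.pderiv (i := i)).pderiv (i := i)

lemma fall_succ (x : ℝ) (s : ℕ) : fall x (s + 1) = x * fall (x - 1) s := by
  rw [fall, Finset.prod_range_succ', fall, mul_comm]
  congr 1
  · simp
  · refine Finset.prod_congr rfl fun j _ => ?_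
    push_cast
    ring

/-- The even-degree formula with denominators cleared, by induction on `κ` via `sphInt_lap`. -/
lemma sphInt_even (κ : ℕ) (p : MvPolynomial (Fin (n + 1)) ℝ) (hp : p.IsHomogeneous (2 * κ)) :
    4 ^ κ * (Nat.factorial κ) * fall (((n + 1 : ℕ) : ℝ) / 2 + κ - 1) κ * sphInt n p =
      (μH[(n : ℝ)] (Metric.sphere (0 : EuclideanSpace ℝ (Fin (n + 1))) 1)).toReal *
        MvPolynomial.eval (0 : Fin (n + 1) → ℝ) ((lap (n + 1))^[κ] p) := by
  induction κ generalizing p with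
  | zero =>
    have hp0 : p = MvPolynomial.C (MvPolynomial.coeff 0 p) := by
      rw [← MvPolynomial.totalDegree_eq_zero_iff_eq_C]
      exact (MvPolynomial.totalDegree_zero_iff_isHomogeneous _).2 hp
    rw [hp0]
    simp [fall, sphInt, Measure.real]
  | succ κ ih =>
    have hp' : p.IsHomogeneous (2 * κ + 2) := hp
    have h := ih _ (isHomogeneous_lap n _ p hp')
    rw [Function.iterate_succ_apply, ← h, sphInt_lap n (2 * κ + 1) p hp', fall_succ,
      Nat.factorial_succ]
    have hx : ((n + 1 : ℕ) : ℝ) / 2 + ((κ + 1 : ℕ) : ℝ) - 1 - 1 =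
        ((n + 1 : ℕ) : ℝ) / 2 + (κ : ℝ) - 1 := by push_cast; ring
    rw [hx]
    push_cast
    ring

end

/-! ### Positivity of the denominator, and parity -/

lemma fall_pos (n κ : ℕ) (hn : 1 ≤ n) : 0 < fall (((n + 1 : ℕ) : ℝ) / 2 + κ - 1) κ := by
  refine Finset.prod_pos fun j hj => ?_
  have h1 : (j : ℝ) + 1 ≤ κ := by exact_mod_cast Finset.mem_range.1 hj
  have h2 : (1 : ℝ) ≤ n := by exact_mod_cast hn
  push_cast
  linarith

lemma eval_neg_of_isHomogeneous_odd (m d : ℕ) (hd : Odd d) (p : MvPolynomial (Fin m) ℝ)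
    (hp : p.IsHomogeneous d) (x : Fin m → ℝ) :
    MvPolynomial.eval (fun i => -x i) p = -MvPolynomial.eval x p := by
  rw [MvPolynomial.eval_eq', MvPolynomial.eval_eq', ← Finset.sum_neg_distrib]
  refine Finset.sum_congr rfl fun e he => ?_
  have hdeg : ∑ i, e i = d := by
    have := hp (MvPolynomial.mem_support_iff.1 he)
    rwa [Finsupp.weight_apply, Finsupp.sum_fintype _ _ (by simp), Finset.sum_congr rfl
      (fun i _ => by simp : ∀ i ∈ Finset.univ, e i • (1 : Fin m → ℕ) i = e i)] at this
  have hprod : ∏ i, (-x i) ^ e i = -∏ i, x i ^ e i := by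
    simp_rw [fun i => neg_pow (x i) (e i)]
    rw [Finset.prod_mul_distrib, Finset.prod_pow_eq_pow_sum, hdeg, hd.neg_one_pow, neg_one_mul]
  rw [hprod, mul_neg]

/-- Integration of homogeneous polynomials over the unit sphere `S^{m-1}` (with its
`(m−1)`-dimensional Hausdorff measure): for even degree `2κ` the average equals
`(L^κ p)(0)/(4^κ κ! [m/2+κ−1]_κ)`, and for odd degree the integral vanishes. -/
theorem sphere_integral_of_homogeneous_polynomial (m : ℕ) (hm : 2 ≤ m)
    (p : MvPolynomial (Fin m) ℝ) :
    (∀ κ : ℕ, p.IsHomogeneous (2 * κ) →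
      ((μH[(m : ℝ) - 1] (Metric.sphere (0 : EuclideanSpace ℝ (Fin m)) 1)).toReal)⁻¹ *
          ∫ x in Metric.sphere (0 : EuclideanSpace ℝ (Fin m)) 1,
            MvPolynomial.eval (fun i => x i) p ∂(μH[(m : ℝ) - 1]) =
        MvPolynomial.eval (0 : Fin m → ℝ) ((lap m)^[κ] p) /
          (4 ^ κ * (Nat.factorial κ) * fall ((m : ℝ) / 2 + κ - 1) κ)) ∧
    (∀ d : ℕ, Odd d → p.IsHomogeneous d →
      ∫ x in Metric.sphere (0 : EuclideanSpace ℝ (Fin m)) 1,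
          MvPolynomial.eval (fun i => x i) p ∂(μH[(m : ℝ) - 1]) = 0) := by
  obtain ⟨n, rfl⟩ : ∃ n, m = n + 1 := ⟨m - 1, by omega⟩
  have hdim : ((n + 1 : ℕ) : ℝ) - 1 = n := by push_cast; ring
  rw [hdim]
  refine ⟨fun κ hp => ?_, fun d hd hp => ?_⟩
  · have h := sphInt_even n κ p hp
    have hV : (μH[(n : ℝ)] (Metric.sphere (0 : EuclideanSpace ℝ (Fin (n + 1))) 1)).toReal ≠ 0 :=
      (ENNReal.toReal_pos (hausdorffMeasure_sphere_pos n).ne'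
        (hausdorffMeasure_sphere_lt_top n).ne).ne'
    have hf := (fall_pos n κ (by omega)).ne'
    have hk : (κ.factorial : ℝ) ≠ 0 := by exact_mod_cast κ.factorial_ne_zero
    rw [eq_div_iff (by positivity), mul_comm, ← sphInt]
    rw [mul_left_comm, h, inv_mul_cancel_left₀ hV]
  · have h := setIntegral_sphere_comp_isometryEquiv (n + 1) n (IsometryEquiv.neg _)
      (fun x => norm_neg x) (fun x => MvPolynomial.eval (fun i => x i) p)
    simp only [IsometryEquiv.neg_apply, PiLp.neg_apply,
      eval_neg_of_isHomogeneous_odd _ d hd p hp, integral_neg] at h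
    linarith
end

section
/- For all natural numbers a, b, k one has ∫_0^1 u^{2a} (1−u²)^b (1+3u²)^k du = (1/((2a+1) · C(a+b+1/2, b))) · ∑_{r=0}^k 4^r · C(−(2a+1)/2, r) · C(−(b+1), k−r) / C(−(2a+2b+3)/2, k), where the integral is with respect to Lebesgue measure on [0,1]. -/
/-- The generalized binomial coefficient `C(x,s) = [x]_s / s!`. -/
noncomputable def genBinom (x : ℝ) (s : ℕ) : ℝ := fall x s / (Nat.factorial s : ℝ)

/-- The rising factorial `x(x+1)⋯(x+n-1)`. -/
noncomputable def rise (x : ℝ) (n : ℕ) : ℝ := ∏ j ∈ Finset.range n, (x + (j : ℝ))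

lemma rise_pos {x : ℝ} (hx : 0 < x) (n : ℕ) : 0 < rise x n :=
  Finset.prod_pos fun j _ => by positivity

lemma rise_succ (x : ℝ) (n : ℕ) : rise x (n + 1) = rise x n * (x + n) :=
  Finset.prod_range_succ _ _

lemma rise_add (x : ℝ) (m n : ℕ) : rise x (m + n) = rise x m * rise (x + m) n := by
  simp only [rise, Finset.prod_range_add, Nat.cast_add, add_assoc]

lemma rise_succ' (x : ℝ) (n : ℕ) : rise x (n + 1) = x * rise (x + 1) n := by
  rw [add_comm n 1, rise_add]
  simp [rise]

lemma factorial_add_eq_rise (b s : ℕ) :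
    ((b + s).factorial : ℝ) = b.factorial * rise ((b : ℝ) + 1) s := by
  induction s with
  | zero => simp [rise]
  | succ s ih =>
    rw [rise_succ, ← add_assoc, Nat.factorial_succ]
    push_cast
    rw [ih]
    ring

lemma genBinom_neg (x : ℝ) (n : ℕ) :
    genBinom (-x) n = (-1) ^ n * rise x n / n.factorial := by
  have h : fall (-x) n = (-1) ^ n * rise x n := by
    induction n with
    | zero => simp [fall, rise]
    | succ n ih =>
      rw [rise_succ, fall, Finset.prod_range_succ, ← fall, ih]
      ring
  rw [genBinom, h]

/-- Reading the factors in reverse order, `[x+n]ₙ = (x+1)(x+2)⋯(x+n)`. -/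
lemma fall_add_natCast (x : ℝ) (n : ℕ) : fall (x + n) n = rise (x + 1) n := by
  rw [fall, rise, ← Finset.prod_range_reflect]
  refine Finset.prod_congr rfl fun j hj => ?_
  have h : ((n - 1 - j : ℕ) : ℝ) = n - 1 - j := by
    have := Finset.mem_range.mp hj
    rw [Nat.cast_sub (by omega), Nat.cast_sub (by omega)]
    simp
  rw [h]
  ring

/-- The beta integral `½ B(a + 1/2, b + 1)`, after the substitution `t = u²`. -/
lemma integral_pow_mul_one_sub_sq_pow (a b : ℕ) :
    ∫ u in (0 : ℝ)..1, u ^ (2 * a) * (1 - u ^ 2) ^ b =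
      b.factorial / (2 * rise ((a : ℝ) + 1 / 2) (b + 1)) := by
  induction b generalizing a with
  | zero =>
    simp [rise]
    field_simp
  | succ b ih =>
    have h : ∀ u : ℝ, u ^ (2 * a) * (1 - u ^ 2) ^ (b + 1) =
        u ^ (2 * a) * (1 - u ^ 2) ^ b - u ^ (2 * (a + 1)) * (1 - u ^ 2) ^ b := fun u => by ring
    simp only [h]
    rw [intervalIntegral.integral_sub
      (Continuous.intervalIntegrable (by fun_prop) _ _)
      (Continuous.intervalIntegrable (by fun_prop) _ _), ih, ih]
    -- With `x = a + 1/2`, everything is expressed through `(x+1)⁽ᵇ⁾`.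
    rw [show ((a + 1 : ℕ) : ℝ) + 1 / 2 = ((a : ℝ) + 1 / 2) + 1 by push_cast; ring]
    have hx : (0 : ℝ) < (a : ℝ) + 1 / 2 := by positivity
    generalize (a : ℝ) + 1 / 2 = x at hx
    have hp := rise_pos (show 0 < x + 1 by positivity) b
    rw [rise_succ' x (b + 1), rise_succ' x b, rise_succ (x + 1) b, Nat.factorial_succ]
    have h2 : x + 1 + (b : ℝ) ≠ 0 := by positivity
    push_cast
    field_simp
    ring

/-- The summands of the binomial expansion relative to the prefactor `B(a, b)`. -/
lemma choose_mul_integral (a b r s : ℕ) :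
    ((r + s).choose r : ℝ) * ((b + s).factorial / (2 * rise (((a + r : ℕ) : ℝ) + 1 / 2) (b + s + 1)))
      = 1 / (((2 * a + 1 : ℕ) : ℝ) * genBinom ((a : ℝ) + (b : ℝ) + 1 / 2) b) *
        (genBinom (-(2 * (a : ℝ) + 1) / 2) r * genBinom (-((b : ℝ) + 1)) s /
          genBinom (-(2 * (a : ℝ) + 2 * (b : ℝ) + 3) / 2) (r + s)) := by
  rw [show -(2 * (a : ℝ) + 1) / 2 = -((a : ℝ) + 1 / 2) by ring,
    show -(2 * (a : ℝ) + 2 * (b : ℝ) + 3) / 2 = -((a : ℝ) + 1 / 2 + ((b + 1 : ℕ) : ℝ)) by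
      push_cast; ring,
    show (a : ℝ) + (b : ℝ) + 1 / 2 = ((a : ℝ) + 1 / 2) + b by ring,
    show ((a + r : ℕ) : ℝ) + 1 / 2 = ((a : ℝ) + 1 / 2) + r by push_cast; ring,
    show ((2 * a + 1 : ℕ) : ℝ) = 2 * ((a : ℝ) + 1 / 2) by push_cast; ring]
  have hx : (0 : ℝ) < (a : ℝ) + 1 / 2 := by positivity
  generalize (a : ℝ) + 1 / 2 = x at hx
  rw [genBinom_neg, genBinom_neg, genBinom_neg, genBinom, fall_add_natCast,
    factorial_add_eq_rise, Nat.choose_symm_add, Nat.add_choose, Nat.cast_div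
      (Nat.factorial_mul_factorial_dvd_factorial_add r s) (by positivity)]
  -- Two splittings of `x⁽ʳ⁺ˢ⁺ᵇ⁺¹⁾`.
  have key : rise x r * rise (x + r) (b + s + 1) =
      x * rise (x + 1) b * rise (x + ((b + 1 : ℕ) : ℝ)) (r + s) := by
    rw [← rise_add, ← rise_succ', ← rise_add]
    congr 1
    ring
  have h1 := rise_pos hx r
  have h2 := rise_pos (show 0 < x + r by positivity) (b + s + 1)
  have h3 := rise_pos (show 0 < x + 1 by positivity) b
  have h4 := rise_pos (show 0 < x + ((b + 1 : ℕ) : ℝ) by positivity) (r + s)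
  have h5 : (-1 : ℝ) ^ (r + s) ≠ 0 := pow_ne_zero _ (by norm_num)
  have h6 : (r.factorial : ℝ) ≠ 0 := by positivity
  have h7 : (s.factorial : ℝ) ≠ 0 := by positivity
  have h8 : (b.factorial : ℝ) ≠ 0 := by positivity
  have h9 : ((r + s).factorial : ℝ) ≠ 0 := by positivity
  rw [pow_add] at h5 ⊢
  generalize rise (x + r) (b + s + 1) = A at *
  generalize rise (x + ((b + 1 : ℕ) : ℝ)) (r + s) = D at *
  generalize rise (x + 1) b = E at *
  generalize rise x r = F at *
  have hA : A = x * E * D / F := by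
    field_simp
    linarith
  rw [hA]
  push_cast
  field_simp

/-- `∫_0^1 u^{2a}(1−u²)^b(1+3u²)^k du` expressed through generalized binomial
coefficients. -/
theorem integral_pow_one_sub_sq_one_add_three_sq (a b k : ℕ) :
    ∫ u in (0 : ℝ)..1, u ^ (2 * a) * (1 - u ^ 2) ^ b * (1 + 3 * u ^ 2) ^ k =
      (1 / (((2 * a + 1 : ℕ) : ℝ) * genBinom ((a : ℝ) + (b : ℝ) + 1 / 2) b)) *
        ∑ r ∈ Finset.range (k + 1),
          4 ^ r * genBinom (-(2 * (a : ℝ) + 1) / 2) r * genBinom (-((b : ℝ) + 1)) (k - r) /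
            genBinom (-(2 * (a : ℝ) + 2 * (b : ℝ) + 3) / 2) k := by
  have h : ∀ u : ℝ, u ^ (2 * a) * (1 - u ^ 2) ^ b * (1 + 3 * u ^ 2) ^ k =
      ∑ r ∈ Finset.range (k + 1), (4 ^ r * (k.choose r : ℝ)) *
        (u ^ (2 * (a + r)) * (1 - u ^ 2) ^ (b + (k - r))) := fun u => by
    rw [show 1 + 3 * u ^ 2 = 4 * u ^ 2 + (1 - u ^ 2) by ring, add_pow, Finset.mul_sum]
    refine Finset.sum_congr rfl fun r _ => ?_
    rw [mul_pow, ← pow_mul, mul_add, pow_add, pow_add]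
    ring
  simp only [h]
  rw [intervalIntegral.integral_finsetSum
    (fun r _ => Continuous.intervalIntegrable (by fun_prop) _ _), Finset.mul_sum]
  refine Finset.sum_congr rfl fun r hr => ?_
  obtain ⟨s, rfl⟩ := Nat.exists_eq_add_of_le (Nat.lt_succ_iff.mp (Finset.mem_range.mp hr))
  rw [intervalIntegral.integral_const_mul, integral_pow_mul_one_sub_sq_pow,
    Nat.add_sub_cancel_left, mul_assoc, choose_mul_integral]
  ring
end
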